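/- For every ε with 0 < ε < 1 there exists a constant δ > 0 such that for every N₀ there exists a simple graph H on N ≥ N₀ vertices whose girth is at least δ·log(N)/ε and whose fractional chromatic number is strictly larger than 2 + ε; that is, every (p:q)-coloring of H satisfies p > (2+ε)·q. -/

import Mathlib

/-- A `(p:q)`-coloring of `G`: each vertex gets a set of at least `q` colors out of
`p` colors, with adjacent vertices receiving disjoint sets. -/
def HasPQColoring {V : Type*} (G : SimpleGraph V) (p q : ℕ) : Prop :=
  ∃ X : V → Finset (Fin p), (∀ v, q ≤ (X v).card) ∧
    ∀ ⦃u v⦄, G.Adj u v → Disjoint (X u) (X v)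

namespace HighGirth

open Finset SimpleGraph
open scoped Classical

noncomputable section

variable {n : ℕ}

/-- Neighbours. -/
def nb (G : SimpleGraph (Fin n)) (u : Fin n) : Finset (Fin n) := univ.filter (fun x => G.Adj u x)

/-- Balls. -/
def ball (G : SimpleGraph (Fin n)) : ℕ → Fin n → Finset (Fin n)
  | 0, u => {u}
  | k + 1, u => {u} ∪ (nb G u).biUnion (ball G k)

lemma self_mem_ball (G : SimpleGraph (Fin n)) (k : ℕ) (u : Fin n) : u ∈ ball G k u := by
  cases k <;> simp [ball]

lemma mem_ball_of_walk (G : SimpleGraph (Fin n)) (k : ℕ) {u v : Fin n} (w : G.Walk u v)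
    (h : w.length ≤ k) : v ∈ ball G k u := by
  induction w generalizing k with
  | nil => exact self_mem_ball G k _
  | @cons a b c hab p ih =>
    cases k with
    | zero => simp at h
    | succ k =>
      simp only [Walk.length_cons, add_le_add_iff_right] at h
      simp only [ball, mem_union, mem_biUnion]
      exact Or.inr ⟨b, by simp [nb, hab], ih k h⟩

lemma card_ball (G : SimpleGraph (Fin n)) (D : ℕ) (hD : ∀ u, (nb G u).card ≤ D) (k : ℕ)
    (u : Fin n) : (ball G k u).card ≤ (D + 1) ^ k := by
  induction k generalizing u with
  | zero => simp [ball]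
  | succ k ih =>
    have h1 : ((nb G u).biUnion (ball G k)).card ≤ (nb G u).card * (D + 1) ^ k :=
      card_biUnion_le_card_mul _ _ _ (fun x _ => ih x)
    have h2 : (nb G u).card * (D + 1) ^ k ≤ D * (D + 1) ^ k := Nat.mul_le_mul_right _ (hD u)
    have h3 : 1 ≤ (D + 1) ^ k := Nat.one_le_pow _ _ (by omega)
    calc _ ≤ 1 + ((nb G u).biUnion (ball G k)).card := by
            simpa [ball] using card_union_le {u} ((nb G u).biUnion (ball G k))
      _ ≤ (D + 1) ^ (k + 1) := by rw [pow_succ]; nlinarith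

/-- Splitting a trail at the new edge. -/
lemma split_trail (G : SimpleGraph (Fin n)) (a b : Fin n) {x y : Fin n}
    (w : (G ⊔ edge a b).Walk x y) (hw : w.IsTrail) (he : s(a, b) ∈ w.edges) :
    (∃ (p : G.Walk x a) (q : G.Walk b y), p.length + q.length + 1 = w.length) ∨
    (∃ (p : G.Walk x b) (q : G.Walk a y), p.length + q.length + 1 = w.length) := by
  induction w with
  | nil => simp at he
  | @cons x z y h p ih =>
    rw [Walk.isTrail_cons] at hw
    by_cases hxz : s(x, z) = s(a, b)
    · have hp : ∀ e ∈ p.edges, e ∈ G.edgeSet := by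
        intro e hep
        have h1 := Walk.edges_subset_edgeSet p hep
        have h2 : e ≠ s(a, b) := by
          rintro rfl
          exact hw.2 (hxz ▸ hep)
        induction e with
        | _ c d =>
          simp only [mem_edgeSet, sup_adj, edge_adj] at h1 ⊢
          rcases h1 with h1 | h1
          · exact h1
          · exact absurd (by simpa using h1.1) h2
      rcases Sym2.eq_iff.1 hxz with ⟨rfl, rfl⟩ | ⟨rfl, rfl⟩
      · exact Or.inl ⟨Walk.nil, p.transfer G hp, by simp⟩
      · exact Or.inr ⟨Walk.nil, p.transfer G hp, by simp⟩
    · have hG : G.Adj x z := by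
        rcases h with h | h
        · exact h
        · rw [edge_adj] at h
          exact absurd (by simpa using h.1) hxz
      have he' : s(a, b) ∈ p.edges := by
        rw [Walk.edges_cons, List.mem_cons] at he
        exact he.resolve_left (fun h => hxz h.symm)
      rcases ih hw.1 he' with ⟨r, q, hl⟩ | ⟨r, q, hl⟩
      · exact Or.inl ⟨Walk.cons hG r, q, by simp only [Walk.length_cons]; omega⟩
      · exact Or.inr ⟨Walk.cons hG r, q, by simp only [Walk.length_cons]; omega⟩

lemma girth_step (G : SimpleGraph (Fin n)) (g : ℕ) (a b : Fin n)
    (hG : ∀ (v : Fin n) (w : G.Walk v v), w.IsCycle → g ≤ w.length)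
    (hab : b ∉ ball G g a) (v : Fin n) (w : (G ⊔ edge a b).Walk v v) (hw : w.IsCycle) :
    g ≤ w.length := by
  by_cases he : s(a, b) ∈ w.edges
  · by_contra hlt
    apply hab
    rcases split_trail G a b w hw.isTrail he with ⟨p, q, hl⟩ | ⟨p, q, hl⟩
    · apply mem_ball_of_walk G g (q.append p).reverse
      simp only [Walk.length_reverse, Walk.length_append]; omega
    · apply mem_ball_of_walk G g (q.append p)
      simp only [Walk.length_append]; omega
  · have hp : ∀ e ∈ w.edges, e ∈ G.edgeSet := by
      intro e hep
      have h1 := Walk.edges_subset_edgeSet w hep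
      have h2 : e ≠ s(a, b) := by
        rintro rfl
        exact he hep
      induction e with
      | _ c d =>
        simp only [mem_edgeSet, sup_adj, edge_adj] at h1 ⊢
        rcases h1 with h1 | h1
        · exact h1
        · exact absurd (by simpa using h1.1) h2
    have := hG v (w.transfer G hp) (hw.transfer hp)
    simpa using this

lemma nb_step (G : SimpleGraph (Fin n)) (a b x : Fin n) :
    (nb (G ⊔ edge a b) x).card ≤
      (nb G x).card + ((if x = a then 1 else 0) + (if x = b then 1 else 0)) := by
  have hsub : nb (G ⊔ edge a b) x ⊆
      nb G x ∪ ((if x = a then {b} else ∅) ∪ (if x = b then {a} else ∅)) := by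
    intro y hy
    simp only [nb, mem_filter, mem_univ, true_and, sup_adj, edge_adj, mem_union] at hy ⊢
    rcases hy with hy | ⟨⟨rfl, rfl⟩ | ⟨rfl, rfl⟩, _⟩
    · exact Or.inl hy
    · simp
    · simp
  refine (card_le_card hsub).trans ((card_union_le _ _).trans ?_)
  refine Nat.add_le_add_left ((card_union_le _ _).trans ?_) _
  split_ifs <;> simp

/-- Large independent sets. -/
def bad (G : SimpleGraph (Fin n)) : Finset (Finset (Fin n)) :=
  univ.filter (fun S => n ≤ 3 * S.card ∧ ∀ u ∈ S, ∀ v ∈ S, ¬ G.Adj u v)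

/-- Allowed pairs. -/
def good (G : SimpleGraph (Fin n)) (D g : ℕ) : Finset (Fin n × Fin n) :=
  univ.filter (fun e => (nb G e.1).card < D ∧ (nb G e.2).card < D ∧ e.2 ∉ ball G g e.1)

lemma count_good (G : SimpleGraph (Fin n)) (D g : ℕ) (S : Finset (Fin n))
    (hS : n ≤ 3 * S.card)
    (hD : ∀ u, (nb G u).card ≤ D)
    (hfull : 24 * (univ.filter (fun u => D ≤ (nb G u).card)).card ≤ n)
    (hball : 24 * (D + 1) ^ g ≤ n) :
    n * n ≤ 16 * ((good G D g).filter (fun e => e.1 ∈ S ∧ e.2 ∈ S)).card := by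
  set F := univ.filter (fun u => D ≤ (nb G u).card) with hF
  set T := S \ F with hT
  have hTc : 7 * n ≤ 24 * T.card := by
    have := le_card_sdiff F S
    rw [← hT] at this
    omega
  have hsub : (T.sigma (fun u => T \ ball G g u)).card ≤
      ((good G D g).filter (fun e => e.1 ∈ S ∧ e.2 ∈ S)).card := by
    apply card_le_card_of_injOn (fun e => (e.1, e.2))
    · rintro ⟨u, v⟩ h
      simp only [coe_sigma, Set.mem_sigma_iff, mem_coe, mem_sdiff, hT, hF, mem_filter, mem_univ,
        true_and, not_le, good] at h ⊢
      tauto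
    · rintro ⟨u, v⟩ _ ⟨u', v'⟩ _ h
      simpa using h
  have hlow : T.card * (T.card - (D + 1) ^ g) ≤ (T.sigma (fun u => T \ ball G g u)).card := by
    rw [card_sigma, ← smul_eq_mul]
    apply card_nsmul_le_sum
    intro u _
    have h1 := le_card_sdiff (ball G g u) T
    have h2 := card_ball G D hD g u
    omega
  have h4 : n ≤ 4 * T.card := by omega
  have h5 : n ≤ 4 * (T.card - (D + 1) ^ g) := by omega
  calc n * n ≤ (4 * T.card) * (4 * (T.card - (D + 1) ^ g)) := Nat.mul_le_mul h4 h5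
    _ = 16 * (T.card * (T.card - (D + 1) ^ g)) := by ring
    _ ≤ _ := Nat.mul_le_mul_left _ (hlow.trans hsub)

lemma exists_pair (G : SimpleGraph (Fin n)) (D g : ℕ) (hn : 0 < n)
    (hne : (bad G).Nonempty)
    (hD : ∀ u, (nb G u).card ≤ D)
    (hfull : 24 * (univ.filter (fun u => D ≤ (nb G u).card)).card ≤ n)
    (hball : 24 * (D + 1) ^ g ≤ n) :
    ∃ e ∈ good G D g, (bad G).card ≤ 16 * ((bad G).filter (fun S => e.1 ∈ S ∧ e.2 ∈ S)).card := by
  by_contra! hcon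
  have hdc : ∑ e ∈ good G D g, ((bad G).filter (fun S => e.1 ∈ S ∧ e.2 ∈ S)).card =
      ∑ S ∈ bad G, ((good G D g).filter (fun e => e.1 ∈ S ∧ e.2 ∈ S)).card := by
    simp only [card_filter]
    exact sum_comm
  have hlow : (bad G).card * (n * n) ≤
      16 * ∑ S ∈ bad G, ((good G D g).filter (fun e => e.1 ∈ S ∧ e.2 ∈ S)).card := by
    rw [mul_sum, ← smul_eq_mul]
    apply card_nsmul_le_sum
    intro S hS
    exact count_good G D g S (by simp only [bad, mem_filter] at hS; exact hS.2.1) hD hfull hball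
  have hpos : 0 < (bad G).card := hne.card_pos
  have hgne : (good G D g).Nonempty := by
    rw [nonempty_iff_ne_empty]
    intro h0
    rw [h0] at hlow
    simp at hlow
    have := hlow
    grind
  have hup : 16 * ∑ e ∈ good G D g, ((bad G).filter (fun S => e.1 ∈ S ∧ e.2 ∈ S)).card <
      (good G D g).card * (bad G).card := by
    rw [mul_sum, ← smul_eq_mul, ← sum_const]
    exact sum_lt_sum_of_nonempty hgne hcon
  have hc : (good G D g).card ≤ n * n := by
    have := card_le_univ (good G D g)
    simpa using this
  rw [hdc] at hup
  nlinarith [Nat.mul_le_mul_right (bad G).card hc]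

lemma iterate (g : ℕ) (hn : 0 < n) (hball : 24 * 769 ^ g ≤ n) (m : ℕ) (hm : m ≤ 16 * n) :
    ∃ G : SimpleGraph (Fin n),
      (∀ (v : Fin n) (w : G.Walk v v), w.IsCycle → g ≤ w.length) ∧
      (∀ u, (nb G u).card ≤ 768) ∧ (∑ u, (nb G u).card ≤ 2 * m) ∧
      16 ^ m * (bad G).card ≤ 15 ^ m * 2 ^ n := by
  induction m with
  | zero =>
    refine ⟨⊥, ?_, ?_, ?_, ?_⟩
    · intro v w hw
      cases w with
      | nil => exact absurd hw (by simp)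
      | cons h p => exact absurd h (by simp)
    · simp [nb]
    · simp [nb]
    · have := card_le_univ (bad (⊥ : SimpleGraph (Fin n)))
      simpa using this
  | succ m ih =>
    obtain ⟨G, hg, hD, hs, hb⟩ := ih (by omega)
    by_cases hne : (bad G).Nonempty
    · have hfull : 24 * (univ.filter (fun u => 768 ≤ (nb G u).card)).card ≤ n := by
        have h1 : (univ.filter (fun u => 768 ≤ (nb G u).card)).card * 768 ≤
            ∑ u ∈ univ.filter (fun u => 768 ≤ (nb G u).card), (nb G u).card := by
          rw [← smul_eq_mul]
          apply card_nsmul_le_sum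
          intro u hu
          exact (mem_filter.1 hu).2
        have h2 : ∑ u ∈ univ.filter (fun u => 768 ≤ (nb G u).card), (nb G u).card ≤
            ∑ u, (nb G u).card := sum_le_sum_of_subset (filter_subset _ _)
        omega
      obtain ⟨⟨a, b⟩, he, hk⟩ := exists_pair G 768 g hn hne hD hfull hball
      simp only [good, mem_filter, mem_univ, true_and] at he
      have hab : a ≠ b := by
        rintro rfl
        exact he.2.2 (self_mem_ball G g a)
      refine ⟨G ⊔ edge a b, girth_step G g a b hg he.2.2, ?_, ?_, ?_⟩
      · intro u
        have h1 := nb_step G a b u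
        have h2 := hD u
        by_cases hua : u = a
        · subst hua
          simp only [if_true, if_neg hab] at h1
          omega
        · by_cases hub : u = b
          · subst hub
            simp only [if_true, if_neg hua] at h1
            omega
          · simp only [if_neg hua, if_neg hub] at h1
            omega
      · calc _ ≤ ∑ u, ((nb G u).card + ((if u = a then 1 else 0) + (if u = b then 1 else 0))) :=
              sum_le_sum (fun u _ => nb_step G a b u)
          _ = ∑ u, (nb G u).card + 2 := by
              simp [sum_add_distrib]
          _ ≤ _ := by omega
      · have hsub : bad (G ⊔ edge a b) ⊆
            (bad G) \ ((bad G).filter (fun S => a ∈ S ∧ b ∈ S)) := by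
          intro S hS
          simp only [bad, mem_filter, mem_univ, true_and, mem_sdiff, sup_adj, edge_adj] at hS ⊢
          refine ⟨⟨hS.1, fun u hu v hv h => hS.2 u hu v hv (Or.inl h)⟩, ?_⟩
          rintro ⟨_, ha, hb⟩
          exact hS.2 a ha b hb (Or.inr ⟨Or.inl ⟨rfl, rfl⟩, hab⟩)
        have h1 := card_le_card hsub
        rw [card_sdiff_of_subset (filter_subset _ _)] at h1
        simp only at hk
        have h2 : 16 * (bad (G ⊔ edge a b)).card ≤ 15 * (bad G).card := by omega
        calc 16 ^ (m + 1) * (bad (G ⊔ edge a b)).card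
            = 16 ^ m * (16 * (bad (G ⊔ edge a b)).card) := by ring
          _ ≤ 16 ^ m * (15 * (bad G).card) := Nat.mul_le_mul_left _ h2
          _ = 15 * (16 ^ m * (bad G).card) := by ring
          _ ≤ 15 * (15 ^ m * 2 ^ n) := Nat.mul_le_mul_left _ hb
          _ = _ := by ring
    · refine ⟨G, hg, hD, by omega, ?_⟩
      rw [not_nonempty_iff_eq_empty] at hne
      simp [hne]

lemma exists_graph (g : ℕ) (hn : 0 < n) (hball : 24 * 769 ^ g ≤ n) :
    ∃ G : SimpleGraph (Fin n),
      (∀ (v : Fin n) (w : G.Walk v v), w.IsCycle → g ≤ w.length) ∧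
      ∀ S : Finset (Fin n), (∀ u ∈ S, ∀ v ∈ S, ¬ G.Adj u v) → 3 * S.card ≤ n := by
  obtain ⟨G, hg, -, -, hb⟩ := iterate g hn hball (16 * n) le_rfl
  refine ⟨G, hg, ?_⟩
  have h0 : (bad G).card = 0 := by
    by_contra hne
    have h1 : 16 ^ (16 * n) ≤ 15 ^ (16 * n) * 2 ^ n :=
      (Nat.le_mul_of_pos_right _ (Nat.pos_of_ne_zero hne)).trans hb
    rw [pow_mul, pow_mul, ← mul_pow] at h1
    have h2 : (15 ^ 16 * 2) ^ n < (16 ^ 16) ^ n := Nat.pow_lt_pow_left (by norm_num) hn.ne'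
    omega
  intro S hS
  by_contra hlt
  rw [card_eq_zero] at h0
  have : S ∈ bad G := by
    simp only [bad, mem_filter, mem_univ, true_and]
    exact ⟨by omega, hS⟩
  rw [h0] at this
  simp at this

lemma coloring_bound (hn : 0 < n) (G : SimpleGraph (Fin n))
    (hS : ∀ S : Finset (Fin n), (∀ u ∈ S, ∀ v ∈ S, ¬ G.Adj u v) → 3 * S.card ≤ n)
    (p q : ℕ) (h : HasPQColoring G p q) : 3 * q ≤ p := by
  obtain ⟨X, hq, hX⟩ := h
  have hdc : ∑ v, (X v).card = ∑ c : Fin p, (univ.filter (fun v => c ∈ X v)).card := by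
    have : ∀ v, (X v).card = (univ.filter (fun c => c ∈ X v)).card := by
      intro v; congr 1; ext; simp
    simp only [this]
    simp only [card_filter]
    exact sum_comm
  have h1 : n * q ≤ ∑ v, (X v).card := by
    have := card_nsmul_le_sum univ (fun v => (X v).card) q (fun v _ => hq v)
    simpa using this
  have h2 : 3 * ∑ c : Fin p, (univ.filter (fun v => c ∈ X v)).card ≤ p * n := by
    rw [mul_sum]
    have := sum_le_card_nsmul univ
      (fun c : Fin p => 3 * (univ.filter (fun v => c ∈ X v)).card) n ?_
    · simpa using this
    · intro c _
      apply hS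
      intro u hu v hv hadj
      exact disjoint_left.1 (hX hadj) (mem_filter.1 hu).2 (mem_filter.1 hv).2
  rw [← hdc] at h2
  have h3 : n * (3 * q) ≤ n * p := by nlinarith
  exact Nat.le_of_mul_le_mul_left h3 hn

end

end HighGirth


/-- for every `0 < ε < 1` there is a constant `δ > 0` such that for
every `N₀` there is a graph `H` on `N ≥ N₀` vertices whose girth is at least
`δ·log N/ε` (every cycle has length at least `δ·log N/ε`) and whose fractional
chromatic number is strictly larger than `2 + ε`, i.e. every `(p:q)`-coloring of `H`
satisfies `p > (2+ε)·q`. -/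
theorem exists_high_girth_high_fractional_chromatic (ε : ℝ) (hε0 : 0 < ε) (hε1 : ε < 1) :
    ∃ δ : ℝ, 0 < δ ∧ ∀ N₀ : ℕ, ∃ (N : ℕ) (H : SimpleGraph (Fin N)),
      N₀ ≤ N ∧
      (∀ (v : Fin N) (w : H.Walk v v), w.IsCycle → δ * Real.log N / ε ≤ (w.length : ℝ)) ∧
      (∀ p q : ℕ, 1 ≤ q → q ≤ p → HasPQColoring H p q → (2 + ε) * (q : ℝ) < (p : ℝ)) := by
  have hL1 : 0 < Real.log 24 := Real.log_pos (by norm_num)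
  have hL2 : 0 < Real.log 769 := Real.log_pos (by norm_num)
  refine ⟨ε / (Real.log 24 + Real.log 769), by positivity, fun N₀ => ?_⟩
  obtain ⟨g, hg1, hgN⟩ : ∃ g : ℕ, 1 ≤ g ∧ N₀ ≤ g := ⟨N₀ + 1, by omega, by omega⟩
  have hpow : g < 769 ^ g := Nat.lt_pow_self (by norm_num)
  have hn : 0 < 24 * 769 ^ g := by positivity
  obtain ⟨G, hG, hS⟩ := HighGirth.exists_graph g hn le_rfl
  refine ⟨24 * 769 ^ g, G, by omega, fun v w hw => ?_, fun p q hq _ hc => ?_⟩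
  · have h1 : (g : ℝ) ≤ w.length := by exact_mod_cast hG v w hw
    refine le_trans ?_ h1
    have hg1R : (1 : ℝ) ≤ g := by exact_mod_cast hg1
    have hlog : Real.log ((24 * 769 ^ g : ℕ) : ℝ) = Real.log 24 + g * Real.log 769 := by
      push_cast
      rw [Real.log_mul (by norm_num) (by positivity), Real.log_pow]
    rw [hlog, div_mul_eq_mul_div, div_div, div_le_iff₀ (by positivity)]
    have h2 : Real.log 24 + g * Real.log 769 ≤ g * (Real.log 24 + Real.log 769) := by nlinarith
    calc _ ≤ ε * (g * (Real.log 24 + Real.log 769)) := mul_le_mul_of_nonneg_left h2 hε0.le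
      _ = _ := by ring
  · have h3 : (3 : ℝ) * q ≤ p := by exact_mod_cast HighGirth.coloring_bound hn G hS p q hc
    have hq1 : (1 : ℝ) ≤ q := by exact_mod_cast hq
    nlinarith
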